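/- Let L be a finite graded lattice (not necessarily atomic) and P a geometric lattice. If there exists a rank-preserving order embedding f : L → P (X ≤ Y iff f(X) ≤ f(Y), and rk_P(f(X)) = rk_L(X) for all X) whose restriction to A(L) is an injection into A(P), then the image under f of every set in I(L) belongs to I(P). -/

import Mathlib

open Set

/-- `rk` is a rank function witnessing that a (bounded) lattice is graded:
it sends `⊥` to `0`, is strictly monotone, and increases by exactly one along covers. -/
def IsGradedRk {L : Type*} [CompleteLattice L] (rk : L → ℕ) : Prop :=
  rk ⊥ = 0 ∧ (∀ a b : L, a < b → rk a < rk b) ∧ (∀ a b : L, a ⋖ b → rk b = rk a + 1)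

/-- `D` is bounded below with respect to the order on atoms encoded by the labeling `ω`:
`D` is nonempty and some atom `a` is a strict `ω`-lower bound of every element of `D`
with `a ≤ ⋁ D`. -/
def IsBB {L : Type*} [CompleteLattice L] (ω : L → ℕ) (D : Set L) : Prop :=
  D.Nonempty ∧ ∃ a : L, IsAtom a ∧ (∀ d ∈ D, ω a < ω d) ∧ a ≤ sSup D

/-- `B` is a set of atoms containing no bounded-below subset. -/
def IsNBB {L : Type*} [CompleteLattice L] (ω : L → ℕ) (B : Set L) : Prop :=
  (∀ b ∈ B, IsAtom b) ∧ ∀ D ⊆ B, ¬ IsBB ω D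

/-- The family `I(L)` of independent sets of the lattice `L`: all sets of atoms that are
NBB with respect to some linear order on the atoms (a linear order on the atoms of the
finite lattice `L` being encoded as an `ℕ`-valued labeling injective on atoms). -/
def latIndep (L : Type*) [CompleteLattice L] : Set (Set L) :=
  { A | ∃ ω : L → ℕ, Set.InjOn ω {a : L | IsAtom a} ∧ IsNBB ω A }

/-!
If the atoms in `A` precede all other atoms, only an atom of `A` can bound a subset of `A` below.
Moreover, among the subsets of `A` lying strictly above `a`, the largest one has the largest join.
So independence of `A` only asks for an order on `A` itself in which no `a ∈ A` lies below the join
of its successors. An order embedding `f` carries this over to `f '' A`: if `f a` were below the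
join of the images of the successors of `a`, it would be below the image of their join, so that
`a` would already be below their join.
-/

theorem exists_injOn_eqOn_forall_lt {α : Type*} {A S : Set α} {ω : α → ℕ} (hA : A.Finite)
    (hS : S.Countable) (hω : InjOn ω A) :
    ∃ ω' : α → ℕ, InjOn ω' S ∧ EqOn ω' ω A ∧ ∀ a ∈ A, ∀ p ∉ A, ω' a < ω' p := by
  classical
  obtain ⟨M, hM⟩ := (hA.image ω).bddAbove
  obtain ⟨e, he⟩ := countable_iff_exists_injOn.mp hS
  let ω' : α → ℕ := A.piecewise ω fun p => M + 1 + e p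
  have eq_on : EqOn ω' ω A := piecewise_eqOn _ _ _
  have eq_off {p : α} (hp : p ∉ A) : ω' p = M + 1 + e p := piecewise_eq_of_notMem _ _ _ hp
  have lt_off : ∀ a ∈ A, ∀ p ∉ A, ω' a < ω' p := by
    intro a ha p hp
    have : ω a ≤ M := hM (mem_image_of_mem ω ha)
    rw [eq_on ha, eq_off hp]
    omega
  refine ⟨ω', fun p hpS q hqS hpq => ?_, eq_on, lt_off⟩
  by_cases hp : p ∈ A <;> by_cases hq : q ∈ A
  · exact hω hp hq (by rwa [eq_on hp, eq_on hq] at hpq)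
  · exact absurd hpq (lt_off p hp q hq).ne
  · exact absurd hpq (lt_off q hq p hp).ne'
  · exact he hpS hqS (by rwa [eq_off hp, eq_off hq, Nat.add_left_cancel_iff] at hpq)

theorem le_sSup_of_map_le_sSup_image {L P : Type*} [CompleteLattice L] [CompleteLattice P]
    (f : L ↪o P) {a : L} {D : Set L} (h : f a ≤ sSup (f '' D)) : a ≤ sSup D := by
  refine f.le_iff_le.mp (h.trans ?_)
  rw [sSup_image]
  exact f.monotone.le_map_sSup

section CompleteLattice

variable {L : Type*} [CompleteLattice L] {ω : L → ℕ} {A : Set L}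

theorem IsNBB.not_le_sSup_gt (h : IsNBB ω A) {a : L} (ha : a ∈ A) :
    ¬ a ≤ sSup {d ∈ A | ω a < ω d} := by
  intro hle
  have hatom : IsAtom a := h.1 a ha
  have hne : {d ∈ A | ω a < ω d}.Nonempty := by
    refine nonempty_iff_ne_empty.mpr fun hempty => hatom.1 (le_bot_iff.mp ?_)
    rwa [hempty, sSup_empty] at hle
  exact h.2 _ (sep_subset _ _) ⟨hne, a, hatom, fun _ hd => hd.2, hle⟩

theorem IsNBB.of_not_le_sSup_gt (hatom : ∀ a ∈ A, IsAtom a)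
    (hfirst : ∀ a ∈ A, ∀ p, IsAtom p → p ∉ A → ω a ≤ ω p)
    (hA : ∀ a ∈ A, ¬ a ≤ sSup {d ∈ A | ω a < ω d}) : IsNBB ω A := by
  refine ⟨hatom, ?_⟩
  rintro D hDA ⟨⟨d, hd⟩, p, hp, hlt, hle⟩
  have hpA : p ∈ A := by
    by_contra hpA
    exact (hlt d hd).not_ge (hfirst d (hDA hd) p hp hpA)
  exact hA p hpA (hle.trans (sSup_le_sSup fun x hx => ⟨hDA hx, hlt x hx⟩))

theorem mem_latIndep_of_not_le_sSup_gt (hL : {p : L | IsAtom p}.Countable) (hfin : A.Finite)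
    (hatom : ∀ a ∈ A, IsAtom a) (hω : InjOn ω A)
    (hA : ∀ a ∈ A, ¬ a ≤ sSup {d ∈ A | ω a < ω d}) : A ∈ latIndep L := by
  obtain ⟨ω', hinj, heq, hlt⟩ := exists_injOn_eqOn_forall_lt hfin hL hω
  refine ⟨ω', hinj, .of_not_le_sSup_gt hatom (fun a ha p _ hpA => (hlt a ha p hpA).le) ?_⟩
  intro a ha
  have hsep : {d ∈ A | ω' a < ω' d} = {d ∈ A | ω a < ω d} :=
    sep_ext_iff.mpr fun d hd => by rw [heq ha, heq hd]
  rw [hsep]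
  exact hA a ha

end CompleteLattice

theorem image_latIndep_of_embedding_general {L P : Type*} [CompleteLattice L] [CompleteLattice P]
    (f : L ↪o P) (hP : {p : P | IsAtom p}.Countable) {A : Set L} (hA : A ∈ latIndep L)
    (hfin : A.Finite) (hmaps : MapsTo f {a : L | IsAtom a} {p : P | IsAtom p}) :
    f '' A ∈ latIndep P := by
  obtain ⟨ω, hω, hNBB⟩ := hA
  let ω' : P → ℕ := Function.extend f ω 0
  have hω' (x : L) : ω' (f x) = ω x := f.injective.extend_apply ω 0 x
  have hinj : InjOn ω' (f '' A) := by
    rintro _ ⟨a, ha, rfl⟩ _ ⟨b, hb, rfl⟩ hab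
    rw [hω', hω'] at hab
    rw [hω (hNBB.1 a ha) (hNBB.1 b hb) hab]
  have hatom : ∀ q ∈ f '' A, IsAtom q :=
    forall_mem_image.mpr fun a ha => hmaps (hNBB.1 a ha)
  refine mem_latIndep_of_not_le_sSup_gt hP (hfin.image f) hatom hinj ?_
  rintro _ ⟨a, ha, rfl⟩ hle
  have hsucc : {q ∈ f '' A | ω' (f a) < ω' q} = f '' {d ∈ A | ω a < ω d} := by
    simp only [← hω']
    exact (image_inter_preimage f A {q | ω' (f a) < ω' q}).symm
  rw [hsucc] at hle
  exact hNBB.not_le_sSup_gt ha (le_sSup_of_map_le_sSup_image f hle)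

/-- Let `L` be a finite graded lattice (not necessarily atomic) and `P` a
geometric lattice. If `f : L → P` is a rank-preserving order embedding whose restriction to
the atoms of `L` is an injection into the atoms of `P`, then the image under `f` of every
independent set of `L` is an independent set of `P`. -/
theorem image_latIndep_of_embedding
    {L P : Type*} [CompleteLattice L] [Fintype L]
    [CompleteLattice P] [Fintype P] [IsAtomistic P]
    (rkL : L → ℕ) (hrkL : IsGradedRk rkL)
    (rkP : P → ℕ) (hrkP : IsGradedRk rkP)
    (hsubP : ∀ x y : P, rkP (x ⊔ y) + rkP (x ⊓ y) ≤ rkP x + rkP y)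
    (f : L → P)
    (hemb : ∀ X Y : L, X ≤ Y ↔ f X ≤ f Y)
    (hrank : ∀ X : L, rkP (f X) = rkL X)
    (hinj : Set.InjOn f {a : L | IsAtom a})
    (hmaps : Set.MapsTo f {a : L | IsAtom a} {a : P | IsAtom a}) :
    ∀ A ∈ latIndep L, f '' A ∈ latIndep P := by
  exact fun A hA => image_latIndep_of_embedding_general
    (.ofMapLEIff f fun X Y => (hemb X Y).symm) (to_countable _) hA A.toFinite hmaps
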